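/- Two quantum affine spaces O_p(k^n) and O_q(k^m) are isomorphic as k-algebras if and only if n = m and there exists a permutation σ ∈ S_n with q_{ij} = p_{σ(i)σ(j)} for all i,j. -/

import Mathlib

open scoped BigOperators

/-- `p` is multiplicatively antisymmetric. -/
def MultAntisym {k : Type*} [Field k] {n : ℕ} (p : Matrix (Fin n) (Fin n) k) : Prop :=
  (∀ i, p i i = 1) ∧ ∀ i j, p i j * p j i = 1

/-- Defining relations of quantum affine `n`-space: `x i * x j = p i j • (x j * x i)`. -/
inductive QASRel (k : Type*) [Field k] {n : ℕ} (p : Matrix (Fin n) (Fin n) k) :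
    FreeAlgebra k (Fin n) → FreeAlgebra k (Fin n) → Prop
  | rel (i j : Fin n) :
      QASRel k p (FreeAlgebra.ι k i * FreeAlgebra.ι k j)
        (p i j • (FreeAlgebra.ι k j * FreeAlgebra.ι k i))

/-- Multiparameter quantum affine `n`-space `O_p(k^n)`. -/
abbrev QAS (k : Type*) [Field k] {n : ℕ} (p : Matrix (Fin n) (Fin n) k) :=
  RingQuot (QASRel k p)

/-- The canonical degree-one generators of `O_p(k^n)`. -/
noncomputable def qasGen (k : Type*) [Field k] {n : ℕ} (p : Matrix (Fin n) (Fin n) k)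
    (i : Fin n) : QAS k p :=
  RingQuot.mkAlgHom k (QASRel k p) (FreeAlgebra.ι k i)

section QASHelpers

variable {k : Type*} [Field k] {n : ℕ}

/-- Universal property. -/
noncomputable def qasLift {B : Type*} [Ring B] [Algebra k B] (p : Matrix (Fin n) (Fin n) k)
    (z : Fin n → B) (hz : ∀ i j, z i * z j = p i j • (z j * z i)) : QAS k p →ₐ[k] B :=
  RingQuot.liftAlgHom k ⟨FreeAlgebra.lift k z, by
    rintro _ _ ⟨i, j⟩
    simp [hz i j]⟩

theorem qasLift_gen {B : Type*} [Ring B] [Algebra k B] (p : Matrix (Fin n) (Fin n) k)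
    (z : Fin n → B) (hz : ∀ i j, z i * z j = p i j • (z j * z i)) (i : Fin n) :
    qasLift p z hz (qasGen k p i) = z i := by
  simp [qasLift, qasGen]

theorem qasGen_rel (p : Matrix (Fin n) (Fin n) k) (i j : Fin n) :
    qasGen k p i * qasGen k p j = p i j • (qasGen k p j * qasGen k p i) := by
  unfold qasGen
  rw [← map_mul, ← map_mul, ← map_smul]
  exact RingQuot.mkAlgHom_rel k (QASRel.rel i j)

theorem qas_induction (p : Matrix (Fin n) (Fin n) k) (C : QAS k p → Prop)
    (hc : ∀ r : k, C (algebraMap k _ r)) (hg : ∀ i, C (qasGen k p i))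
    (hm : ∀ a b, C a → C b → C (a * b)) (ha : ∀ a b, C a → C b → C (a + b)) (z : QAS k p) :
    C z := by
  obtain ⟨w, rfl⟩ := RingQuot.mkAlgHom_surjective k (QASRel k p) z
  induction w using FreeAlgebra.induction with
  | grade0 r => simpa using hc r
  | grade1 i => exact hg i
  | mul a b h1 h2 => rw [map_mul]; exact hm _ _ h1 h2
  | add a b h1 h2 => rw [map_add]; exact ha _ _ h1 h2

theorem qas_hom_ext {B : Type*} [Ring B] [Algebra k B] (p : Matrix (Fin n) (Fin n) k)
    (f g : QAS k p →ₐ[k] B) (h : ∀ i, f (qasGen k p i) = g (qasGen k p i)) : f = g := by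
  ext z
  simpa [qasGen] using h z

/-- First-order expansion at the origin. -/
noncomputable def qasDual (p : Matrix (Fin n) (Fin n) k) :
    QAS k p →ₐ[k] TrivSqZeroExt k (Fin n → k) :=
  qasLift p (fun i => TrivSqZeroExt.inr (Pi.single i 1)) (by intro i j; simp)

theorem qasDual_gen (p : Matrix (Fin n) (Fin n) k) (i : Fin n) :
    qasDual p (qasGen k p i) = TrivSqZeroExt.inr (Pi.single i 1) := qasLift_gen _ _ _ _

/-- augmentation -/
noncomputable def qasAug (p : Matrix (Fin n) (Fin n) k) (z : QAS k p) : k := (qasDual p z).fst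

/-- linear coefficient -/
noncomputable def qasCoef (p : Matrix (Fin n) (Fin n) k) (z : QAS k p) (c : Fin n) : k :=
  (qasDual p z).snd c

variable (p : Matrix (Fin n) (Fin n) k)

@[simp] theorem qasAug_gen (i) : qasAug p (qasGen k p i) = 0 := by simp [qasAug, qasDual_gen]
@[simp] theorem qasCoef_gen (i c) : qasCoef p (qasGen k p i) c = if c = i then 1 else 0 := by
  simp [qasCoef, qasDual_gen, Pi.single_apply]
@[simp] theorem qasAug_mul (a b) : qasAug p (a * b) = qasAug p a * qasAug p b := by
  simp [qasAug]
@[simp] theorem qasAug_add (a b) : qasAug p (a + b) = qasAug p a + qasAug p b := by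
  simp [qasAug]
@[simp] theorem qasAug_sub (a b) : qasAug p (a - b) = qasAug p a - qasAug p b := by
  simp [qasAug]
@[simp] theorem qasAug_smul (r : k) (b) : qasAug p (r • b) = r * qasAug p b := by
  simp [qasAug]
@[simp] theorem qasAug_algebraMap (r : k) : qasAug p (algebraMap k _ r) = r := by
  simp [qasAug, TrivSqZeroExt.algebraMap_eq_inl]
@[simp] theorem qasCoef_mul (a b c) : qasCoef p (a * b) c
    = qasAug p a * qasCoef p b c + qasAug p b * qasCoef p a c := by
  simp [qasAug, qasCoef]
@[simp] theorem qasCoef_add (a b c) : qasCoef p (a + b) c = qasCoef p a c + qasCoef p b c := by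
  simp [qasCoef]
@[simp] theorem qasCoef_sub (a b c) : qasCoef p (a - b) c = qasCoef p a c - qasCoef p b c := by
  simp [qasCoef]
@[simp] theorem qasCoef_smul (r : k) (b c) : qasCoef p (r • b) c = r * qasCoef p b c := by
  simp [qasCoef]
@[simp] theorem qasCoef_algebraMap (r : k) (c) : qasCoef p (algebraMap k _ r) c = 0 := by
  simp [qasCoef, TrivSqZeroExt.algebraMap_eq_inl]

theorem qas_lin_inj {m : ℕ} (q : Matrix (Fin m) (Fin m) k) (φ : QAS k p ≃ₐ[k] QAS k q)
    (v : Fin m → k) (hv : ∀ i, ∑ c, qasCoef q (φ (qasGen k p i)) c * v c = 0) : v = 0 := by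
  have key : ∀ z, ∑ c, qasCoef q (φ z) c * v c = 0 := by
    apply qas_induction
    · intro r; simp
    · exact hv
    · intro a b h1 h2
      simp only [map_mul, qasCoef_mul, add_mul, Finset.sum_add_distrib, mul_assoc,
        ← Finset.mul_sum, h1, h2]
      simp
    · intro a b h1 h2
      simp only [map_add, qasCoef_add, add_mul, Finset.sum_add_distrib, h1, h2]
      simp
  ext c
  have := key (φ.symm (qasGen k q c))
  simpa using this

/-- The Jacobian matrix. -/
noncomputable def qasJac {m : ℕ} (q : Matrix (Fin m) (Fin m) k) (φ : QAS k p ≃ₐ[k] QAS k q) :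
    Matrix (Fin n) (Fin m) k := fun i c => qasCoef q (φ (qasGen k p i)) c

theorem qas_dim_le {m : ℕ} (q : Matrix (Fin m) (Fin m) k) (φ : QAS k p ≃ₐ[k] QAS k q) :
    m ≤ n := by
  have hinj : Function.Injective (qasJac p q φ).mulVecLin := by
    rw [injective_iff_map_eq_zero]
    intro v hv
    exact qas_lin_inj p q φ v (fun i => congrFun hv i)
  simpa using LinearMap.finrank_le_finrank_of_injective hinj

/-- Off-diagonal degree two coefficients. -/
theorem qas_deg_two (hp : MultAntisym p) (a b : Fin n) (hab : a ≠ b) :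
    ∃ ρ : QAS k p →ₐ[k] Matrix (Fin 4) (Fin 4) k, ∀ z, ρ z =
      !![qasAug p z, qasCoef p z a, qasCoef p z b, ρ z 0 3;
         0, qasAug p z, 0, qasCoef p z b;
         0, 0, qasAug p z, p b a * qasCoef p z a;
         0, 0, 0, qasAug p z] := by
  have h1 := hp.2 a b
  have h2 := hp.2 b a
  let Y : Fin n → Matrix (Fin 4) (Fin 4) k := fun c =>
    !![0, if a = c then 1 else 0, if b = c then 1 else 0, 0;
       0, 0, 0, if b = c then 1 else 0;
       0, 0, 0, p b a * if a = c then 1 else 0;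
       0, 0, 0, 0]
  have hY : ∀ i j, Y i * Y j = p i j • (Y j * Y i) := by
    intro i j
    have core : ∀ u v u' v' w r : k, u * v' + v * (w * u') = r * (u' * v + v' * (w * u)) →
        !![0, u, v, 0; 0, 0, 0, v; 0, 0, 0, w * u; 0, 0, 0, 0] *
          !![0, u', v', 0; 0, 0, 0, v'; 0, 0, 0, w * u'; 0, 0, 0, 0] =
        r • (!![0, u', v', 0; 0, 0, 0, v'; 0, 0, 0, w * u'; 0, 0, 0, 0] *
          !![0, u, v, 0; 0, 0, 0, v; 0, 0, 0, w * u; 0, 0, 0, 0]) := by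
      intro u v u' v' w r h
      ext s t
      fin_cases s <;> fin_cases t <;> simp [Matrix.mul_apply, Fin.sum_univ_four, h]
    apply core
    grind
  refine ⟨qasLift p Y hY, ?_⟩
  apply qas_induction
  · intro r
    ext s t
    fin_cases s <;> fin_cases t <;> simp [Matrix.algebraMap_matrix_apply]
  · intro i
    ext s t
    fin_cases s <;> fin_cases t <;> simp [qasLift_gen, Y]
  · intro x y hx hy
    have := congrArg₂ (· * ·) hx hy
    ext s t
    have e := (congrFun (congrFun (map_mul (qasLift p Y hY) x y) s) t).trans
      (congrFun (congrFun this s) t)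
    by_cases h : s = 0 ∧ t = 3
    · obtain ⟨rfl, rfl⟩ := h
      simp
    · rw [e]
      fin_cases s <;> fin_cases t <;> simp [Matrix.mul_apply, Fin.sum_univ_four] at h ⊢ <;> ring
  · intro x y hx hy
    have := congrArg₂ (· + ·) hx hy
    ext s t
    have e := (congrFun (congrFun (map_add (qasLift p Y hY) x y) s) t).trans
      (congrFun (congrFun this s) t)
    by_cases h : s = 0 ∧ t = 3
    · obtain ⟨rfl, rfl⟩ := h
      simp
    · rw [e]
      fin_cases s <;> fin_cases t <;> simp at h ⊢ <;> ring

/-- Diagonal degree two coefficients. -/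
theorem qas_deg_diag (hp : MultAntisym p) (a : Fin n) :
    ∃ ρ : QAS k p →ₐ[k] Polynomial k, ∀ z, (ρ z).coeff 1 = qasCoef p z a ∧
      (ρ z).coeff 0 = qasAug p z := by
  let Y : Fin n → Polynomial k := fun c => if a = c then Polynomial.X else 0
  have hY : ∀ i j, Y i * Y j = p i j • (Y j * Y i) := by
    intro i j
    simp only [Y]
    split_ifs with hi hj
    · rw [← hi, ← hj, hp.1, one_smul]
    all_goals simp
  refine ⟨qasLift p Y hY, ?_⟩
  apply qas_induction
  · intro r
    simp [Polynomial.coeff_C]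
  · intro i
    by_cases hi : a = i <;> simp [qasLift_gen, Y, hi]
  · rintro x y ⟨h1, h2⟩ ⟨h3, h4⟩
    simp [Polynomial.mul_coeff_one, h1, h2, h3, h4]
    ring
  · rintro x y ⟨h1, h2⟩ ⟨h3, h4⟩
    simp [h1, h2, h3, h4]

/-- The combinatorial core. -/
theorem qas_perm_of_matrix (p q A B : Matrix (Fin n) (Fin n) k)
    (hq : MultAntisym q) (hp : MultAntisym p) (hBA : B * A = 1)
    (hd : ∀ i j a, A i a * A j a * (1 - p i j) = 0)
    (ho : ∀ i j a b, a ≠ b → A i a * A j b + q b a * (A i b * A j a)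
      = p i j * (A j a * A i b + q b a * (A j b * A i a))) :
    ∃ σ : Equiv.Perm (Fin n), ∀ i j, q i j = p (σ i) (σ j) := by
  have hdet : A.det ≠ 0 := by
    intro h
    have := congrArg Matrix.det hBA
    simp [h] at this
  rw [Matrix.det_apply] at hdet
  obtain ⟨σ, -, hσ⟩ := Finset.exists_ne_zero_of_sum_ne_zero hdet
  have hσ' : ∀ i, A (σ i) i ≠ 0 := by
    intro i hi
    apply hσ
    rw [Finset.prod_eq_zero (f := fun i => A (σ i) i) (Finset.mem_univ i) hi, smul_zero]
  have hcol : ∀ i a b, a ≠ b → A i a ≠ 0 → A i b ≠ 0 → q b a = 1 := by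
    intro i a b hab ha hb
    by_contra hne
    have hprop : ∀ j, A j a * A i b = A j b * A i a := by
      intro j
      by_cases hpij : p i j = 1
      · have := ho i j a b hab
        rw [hpij] at this
        have h2 : (q b a - 1) * (A j a * A i b - A j b * A i a) = 0 := by linear_combination this
        rcases mul_eq_zero.1 h2 with h | h
        · exact absurd (sub_eq_zero.1 h) hne
        · exact sub_eq_zero.1 h
      · have h3 : (1 - p i j) ≠ 0 := fun h => hpij (sub_eq_zero.1 h).symm
        have ha' := hd i j a
        have hb' := hd i j b
        simp only [mul_eq_zero, ha, hb, h3, or_false, false_or] at ha' hb'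
        simp [ha', hb']
    have e1 : ∑ j, B a j * A j a = 1 := by
      have := congrFun (congrFun hBA a) a
      simpa [Matrix.mul_apply] using this
    have e2 : ∑ j, B a j * A j b = 0 := by
      have := congrFun (congrFun hBA a) b
      simpa [Matrix.mul_apply, hab] using this
    have e3 : (∑ j, B a j * A j a) * A i b = (∑ j, B a j * A j b) * A i a := by
      rw [Finset.sum_mul, Finset.sum_mul]
      refine Finset.sum_congr rfl fun j _ => ?_
      rw [mul_assoc, hprop, mul_assoc]
    rw [e1, e2] at e3
    apply hb
    simpa using e3
  refine ⟨σ, fun a b => ?_⟩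
  by_cases hab : a = b
  · subst hab; rw [hq.1, hp.1]
  have hqq := hq.2 a b
  suffices h : p (σ a) (σ b) * q b a = 1 by
    have hne : q b a ≠ 0 := right_ne_zero_of_mul_eq_one hqq
    exact mul_right_cancel₀ hne (hqq.trans h.symm)
  by_cases hz : A (σ a) b * A (σ b) a = 0
  · have := ho (σ a) (σ b) a b hab
    have h2 : (A (σ a) a * A (σ b) b) * (1 - p (σ a) (σ b) * q b a) = 0 := by
      linear_combination this + (p (σ a) (σ b) - q b a) * hz
    have h3 := (mul_eq_zero.1 h2).resolve_left (mul_ne_zero (hσ' a) (hσ' b))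
    exact (sub_eq_zero.1 h3).symm
  · have h1 : A (σ a) b ≠ 0 := left_ne_zero_of_mul hz
    have h2 : A (σ b) a ≠ 0 := right_ne_zero_of_mul hz
    have h3 := hcol (σ a) a b hab (hσ' a) h1
    have h4 := (mul_eq_zero.1 (hd (σ a) (σ b) a)).resolve_left (mul_ne_zero (hσ' a) h2)
    rw [h3, ← sub_eq_zero.1 h4, one_mul]

theorem qas_perm_of_iso (p q : Matrix (Fin n) (Fin n) k)
    (hp : MultAntisym p) (hq : MultAntisym q) (φ : QAS k p ≃ₐ[k] QAS k q) :
    ∃ σ : Equiv.Perm (Fin n), ∀ i j, q i j = p (σ i) (σ j) := by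
  obtain ⟨B, hBA⟩ : ∃ B : Matrix (Fin n) (Fin n) k, B * qasJac p q φ = 1 := by
    apply (Matrix.mulVec_injective_iff_isUnit.1 _).exists_left_inv
    intro v w hvw
    rw [← sub_eq_zero]
    refine qas_lin_inj p q φ _ (fun i => ?_)
    have := congrFun (sub_eq_zero.2 hvw) i
    rw [← Matrix.mulVec_sub] at this
    exact this
  have hAB : qasJac p q φ * B = 1 := mul_eq_one_comm.1 hBA
  set A := qasJac p q φ with hA
  let X : Fin n → QAS k q := fun i => φ (qasGen k p i)
  let al : Fin n → k := fun i => qasAug q (X i)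
  have hX : ∀ i j, X i * X j = p i j • (X j * X i) := by
    intro i j
    simp only [X, ← map_mul, ← map_smul]
    rw [qasGen_rel]
  have hcoefX : ∀ i c, qasCoef q (X i) c = A i c := fun i c => rfl
  have hcen : ∀ i j, i ≠ j → (1 - p i j) * al i = 0 := by
    intro i j hij
    have h1 : ∀ c, (1 - p i j) * (al i * A j c + al j * A i c) = 0 := by
      intro c
      have := congrArg (fun z => qasCoef q z c) (hX i j)
      simp only [qasCoef_mul, qasCoef_smul, hcoefX] at this
      simp only [al]
      linear_combination this
    have e1 : ∑ c, A j c * B c j = 1 := by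
      have := congrFun (congrFun hAB j) j
      simpa [Matrix.mul_apply] using this
    have e2 : ∑ c, A i c * B c j = 0 := by
      have := congrFun (congrFun hAB i) j
      simpa [Matrix.mul_apply, hij] using this
    have e3 : ∑ c, (1 - p i j) * (al i * A j c + al j * A i c) * B c j
        = (1 - p i j) * (al i * ∑ c, A j c * B c j + al j * ∑ c, A i c * B c j) := by
      simp only [Finset.mul_sum, ← Finset.sum_add_distrib]
      refine Finset.sum_congr rfl fun c _ => ?_
      ring
    rw [e1, e2] at e3
    simp only [h1, zero_mul, Finset.sum_const_zero, mul_one, mul_zero, add_zero] at e3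
    exact e3.symm
  let Z : Fin n → QAS k q := fun i => X i - algebraMap k _ (al i)
  have hZ : ∀ i j, Z i * Z j = p i j • (Z j * Z i) := by
    intro i j
    by_cases h : p i j = 1
    · have := hX i j
      rw [h, one_smul] at this
      have c1 := Algebra.commutes (al i) (X j)
      have c2 := Algebra.commutes (al j) (X i)
      have c3 := Algebra.commutes (al i) (algebraMap k (QAS k q) (al j))
      simp only [Z, h, one_smul, mul_sub, sub_mul]
      rw [this, c1, c2, c3]
      abel
    · have hij : i ≠ j := by rintro rfl; exact h (hp.1 i)
      have h' : p j i ≠ 1 := by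
        intro h2
        have := hp.2 i j
        rw [h2, mul_one] at this
        exact h this
      have ai : al i = 0 :=
        (mul_eq_zero.1 (hcen i j hij)).resolve_left (fun e => h (sub_eq_zero.1 e).symm)
      have aj : al j = 0 :=
        (mul_eq_zero.1 (hcen j i hij.symm)).resolve_left (fun e => h' (sub_eq_zero.1 e).symm)
      simp only [Z, ai, aj, map_zero, sub_zero]
      exact hX i j
  have hZaug : ∀ i, qasAug q (Z i) = 0 := by intro i; simp [Z, al]
  have hZcoef : ∀ i c, qasCoef q (Z i) c = A i c := by intro i c; simp [Z, hcoefX]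
  refine qas_perm_of_matrix p q A B hq hp hBA ?_ ?_
  · intro i j a
    obtain ⟨ρ, hρ⟩ := qas_deg_diag q hq a
    have h1 := congrArg (fun z => ρ z) (hZ i j)
    simp only [map_mul, map_smul] at h1
    have h2 : Polynomial.C (1 - p i j) * (ρ (Z i) * ρ (Z j)) = 0 := by
      rw [mul_comm (ρ (Z j)), Polynomial.smul_eq_C_mul] at h1
      rw [map_sub, map_one]
      linear_combination h1
    rcases mul_eq_zero.1 h2 with h | h
    · rw [Polynomial.C_eq_zero.1 h, mul_zero]
    · rcases mul_eq_zero.1 h with h | h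
      · rw [← hZcoef i a, ← (hρ (Z i)).1, h]; simp
      · rw [← hZcoef j a, ← (hρ (Z j)).1, h]; simp
  · intro i j a b hab
    obtain ⟨ρ, hρ⟩ := qas_deg_two q hq a b hab
    have h1 := congrArg (fun z => ρ z 0 3) (hZ i j)
    simp only [map_mul, map_smul] at h1
    rw [hρ (Z i), hρ (Z j)] at h1
    simp [Matrix.mul_apply, Fin.sum_univ_four, hZaug, hZcoef] at h1
    linear_combination h1

end QASHelpers

/-- `O_p(k^n) ≅ O_q(k^m)` iff `n = m` and `q` is a permutation of `p`. -/
theorem qas_iso_iff_perm {k : Type*} [Field k] {n m : ℕ}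
    (p : Matrix (Fin n) (Fin n) k) (q : Matrix (Fin m) (Fin m) k)
    (hp : MultAntisym p) (hq : MultAntisym q) :
    Nonempty (QAS k p ≃ₐ[k] QAS k q) ↔
      ∃ h : n = m, ∃ σ : Equiv.Perm (Fin n),
        ∀ i j, q (Fin.cast h i) (Fin.cast h j) = p (σ i) (σ j) := by
  constructor
  · rintro ⟨φ⟩
    have h : n = m := le_antisymm (qas_dim_le q p φ.symm) (qas_dim_le p q φ)
    subst h
    exact ⟨rfl, qas_perm_of_iso p q hp hq φ⟩
  · rintro ⟨rfl, σ, hσ⟩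
    have hσ : ∀ i j, q i j = p (σ i) (σ j) := hσ
    refine ⟨AlgEquiv.ofAlgHom
      (qasLift p (fun i => qasGen k q (σ.symm i)) ?_)
      (qasLift q (fun i => qasGen k p (σ i)) ?_) ?_ ?_⟩
    · intro i j
      rw [qasGen_rel, hσ]; simp
    · intro i j
      rw [qasGen_rel, hσ]
    · apply qas_hom_ext; intro i; simp [qasLift_gen]
    · apply qas_hom_ext; intro i; simp [qasLift_gen]
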